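/- Let c be a choice with competitive limited attention on a finite nonempty set X, and suppose there exist a menu A and x,y ∈ A such that either x = c({x,y}) = c(A\{y}) ≠ c(A) = y, or y = c({x,y}) ≠ c(A\{y}) = c(A) = x. Then x f y for every list f that list rationalizes c; moreover, for every explanation by competitive limited attention (Γ,▷) of c there is z ∈ A\{y} with z ▷ y. -/

import Mathlib

/-!
If `y` is last in the list `f` among the elements of `A`, then `c A = c {c (A \ {y}), y} = c {x, y}`,
which each of the two hypotheses excludes. If instead `f y x` and the last element `l` of `A` is not
`y`, then `l ∉ {x, y}`, so `l` is chosen neither from `A` nor from `A \ {y}`; deleting it therefore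
changes neither choice, and the same situation recurs in the smaller menu `A \ {l}`. Induction on
the size of `A` gives the first claim (`list_follows`).

For the second claim, if `y` were `▷`-maximal in `A`, the competition property would give
`y ∈ Γ {x, y} ↔ y ∈ Γ A`, so `y`, dominating every element of both menus, would be chosen from
both or from neither, against the hypothesis.
-/

open Finset

variable {X : Type*} [DecidableEq X]

/-- `a` is the `r`-greatest element among those satisfying `P`. -/
def IsRMax (r : X → X → Prop) (P : X → Prop) (a : X) : Prop :=
  P a ∧ ∀ y, P y → y ≠ a → r a y

/-- `a` is the `r`-least element among those satisfying `P`. -/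
def IsRMin (r : X → X → Prop) (P : X → Prop) (a : X) : Prop :=
  P a ∧ ∀ y, P y → y ≠ a → r y a

def Asym (r : X → X → Prop) : Prop := ∀ x y, r x y → ¬ r y x

def StrictPartial (r : X → X → Prop) : Prop :=
  Asym r ∧ ∀ x y z, r x y → r y z → r x z

def StrictLinear (r : X → X → Prop) : Prop :=
  StrictPartial r ∧ ∀ x y : X, x ≠ y → r x y ∨ r y x

/-- No cycle `x₁ ≻ x₂ ≻ … ≻ xₙ ≻ x₁` with `n ≥ 3`. -/
def Acyclic (r : X → X → Prop) : Prop :=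
  ¬ ∃ (n : ℕ) (f : ℕ → X), 3 ≤ n ∧ (∀ i, i + 1 < n → r (f i) (f (i + 1))) ∧
    r (f (n - 1)) (f 0)

def ChoiceFun (c : Finset X → X) : Prop :=
  ∀ A : Finset X, A.Nonempty → c A ∈ A

def ChoiceCorr (Γ : Finset X → Finset X) : Prop :=
  ∀ A : Finset X, A.Nonempty → (Γ A).Nonempty ∧ Γ A ⊆ A

/-- `x ∈ max(A, r)`: `x` is in `A` and is undominated in `A` w.r.t. `r`. -/
def MaxOf (r : X → X → Prop) (A : Finset X) (x : X) : Prop :=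
  x ∈ A ∧ ∀ y ∈ A, ¬ r y x

/-- The pair `(gt, rhd)` describes `c` as a shortlisting. -/
def Describes (gt rhd : X → X → Prop) (c : Finset X → X) : Prop :=
  StrictPartial gt ∧ StrictLinear rhd ∧
    ∀ A : Finset X, A.Nonempty → IsRMax rhd (MaxOf gt A) (c A)

def Shortlisting (c : Finset X → X) : Prop :=
  ∃ gt rhd : X → X → Prop, Describes gt rhd c

/-- Optimal attention filter. -/
def OptimalFilter (Γ : Finset X → Finset X) : Prop :=
  ChoiceCorr Γ ∧
  (∀ B : Finset X, B.Nonempty → ∀ x ∈ B, x ∉ Γ B → Γ (B.erase x) ⊆ Γ B) ∧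
  (∀ B : Finset X, B.Nonempty → ∀ x ∈ B, ∀ y : X,
    y ∈ Γ {x, y} → y ∈ Γ (B.erase x) → y ∈ Γ B) ∧
  (∀ B : Finset X, B.Nonempty → ∀ x ∈ B, (B.erase x).Nonempty →
    (Γ B).erase x ⊆ Γ (B.erase x))

/-- `(Γ, rhd)` is an explanation by optimal limited attention of `c`. -/
def ExplByOLA (Γ : Finset X → Finset X) (rhd : X → X → Prop) (c : Finset X → X) : Prop :=
  OptimalFilter Γ ∧ StrictLinear rhd ∧
    ∀ A : Finset X, A.Nonempty → IsRMax rhd (· ∈ Γ A) (c A)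

/-- Choice with optimal limited attention. -/
def COLA (c : Finset X → X) : Prop :=
  ∃ (Γ : Finset X → Finset X) (rhd : X → X → Prop), ExplByOLA Γ rhd c

/-- Salient attention filter relative to `rhd`. -/
def SalientFilter (rhd : X → X → Prop) (Γ : Finset X → Finset X) : Prop :=
  ChoiceCorr Γ ∧
  ∀ B : Finset X, B.Nonempty → ∀ x ∈ B,
    ¬ IsRMin rhd (· ∈ B) x → ¬ IsRMax rhd (· ∈ Γ B) x →
      (Γ B).erase x = Γ (B.erase x)

/-- `(Γ, rhd)` is an explanation by salient limited attention of `c`. -/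
def ExplBySLA (Γ : Finset X → Finset X) (rhd : X → X → Prop) (c : Finset X → X) : Prop :=
  StrictLinear rhd ∧ SalientFilter rhd Γ ∧
    ∀ A : Finset X, A.Nonempty → IsRMax rhd (· ∈ Γ A) (c A)

/-- Choice with salient limited attention. -/
def CSLA (c : Finset X → X) : Prop :=
  ∃ (Γ : Finset X → Finset X) (rhd : X → X → Prop), ExplBySLA Γ rhd c

/-- Selective salient attention filter relative to `rhd`. -/
def SelectiveFilter (rhd : X → X → Prop) (Γ : Finset X → Finset X) : Prop :=
  ChoiceCorr Γ ∧
  ∀ B : Finset X, B.Nonempty → ∀ x ∈ B,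
    ¬ IsRMax rhd (· ∈ Γ B) x → (Γ B).erase x = Γ (B.erase x)

/-- Choice with selective salient limited attention. -/
def CSSLA (c : Finset X → X) : Prop :=
  ∃ (Γ : Finset X → Finset X) (rhd : X → X → Prop),
    StrictLinear rhd ∧ SelectiveFilter rhd Γ ∧
      ∀ A : Finset X, A.Nonempty → IsRMax rhd (· ∈ Γ A) (c A)

def Rationalizable (c : Finset X → X) : Prop :=
  ∃ rhd : X → X → Prop, StrictLinear rhd ∧
    ∀ A : Finset X, A.Nonempty → IsRMax rhd (· ∈ A) (c A)

/-- Competitive attention filter relative to `rhd`. -/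
def CompetitiveFilter (rhd : X → X → Prop) (Γ : Finset X → Finset X) : Prop :=
  ChoiceCorr Γ ∧
  (∀ A : Finset X, A.Nonempty → ∀ x ∈ A, x ∉ Γ A → Γ A = Γ (A.erase x)) ∧
  (∀ A : Finset X, 1 < A.card → ∀ x y : X,
    IsRMax rhd (· ∈ A) y → IsRMax rhd (· ∈ Γ (A.erase y)) x →
      (y ∈ Γ {x, y} ↔ y ∈ Γ A))

/-- `(Γ, rhd)` is an explanation by competitive limited attention of `c`. -/
def ExplByCCLA (Γ : Finset X → Finset X) (rhd : X → X → Prop) (c : Finset X → X) : Prop :=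
  StrictLinear rhd ∧ CompetitiveFilter rhd Γ ∧
    ∀ A : Finset X, A.Nonempty → IsRMax rhd (· ∈ Γ A) (c A)

/-- Choice with competitive limited attention. -/
def CCLA (c : Finset X → X) : Prop :=
  ∃ (Γ : Finset X → Finset X) (rhd : X → X → Prop), ExplByCCLA Γ rhd c

/-- The list `f` list rationalizes `c`. -/
def ListRationalizes (f : X → X → Prop) (c : Finset X → X) : Prop :=
  StrictLinear f ∧
    ∀ A : Finset X, 1 < A.card → ∀ l : X, IsRMax f (· ∈ A) l →
      c A = c {c (A.erase l), l}

def ListRational (c : Finset X → X) : Prop :=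
  ∃ f : X → X → Prop, ListRationalizes f c

/-- `(u, v, W)` is a general-temptation representation of `c`. -/
def GTRrep (c : Finset X → X) (u v : X → ℝ) (W : ℝ → ℝ → ℝ) : Prop :=
  (∀ r s : ℝ, 0 ≤ W r s) ∧
  (∀ r₁ r₂ s : ℝ, r₁ < r₂ → W r₁ s < W r₂ s) ∧
  (∀ r s₁ s₂ : ℝ, s₁ < s₂ → W r s₁ < W r s₂) ∧
  ∀ (A : Finset X) (hA : A.Nonempty),
    c A ∈ A ∧ ∀ x ∈ A, x ≠ c A →
      W (u x) (v x - A.sup' hA v) < W (u (c A)) (v (c A) - A.sup' hA v)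

def HasGTR (c : Finset X → X) : Prop :=
  ∃ (u v : X → ℝ) (W : ℝ → ℝ → ℝ), GTRrep c u v W

/-- `(gg, U)` is a conspicuity based endogenous reference representation of `c`. -/
def CERrep (c : Finset X → X) (gg : X → X → Prop) (U : X → X → ℝ) : Prop :=
  StrictLinear gg ∧ (∀ z : X, Function.Injective (U z)) ∧
  ∀ A : Finset X, A.Nonempty → ∀ m : X, IsRMax gg (· ∈ A) m →
    c A ∈ A ∧ ∀ x ∈ A, x ≠ c A → U m x < U m (c A)

def HasCER (c : Finset X → X) : Prop :=
  ∃ (gg : X → X → Prop) (U : X → X → ℝ), CERrep c gg U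

/-- `(A, B)` is a switch of `c`. -/
def Switch (c : Finset X → X) (A B : Finset X) : Prop :=
  A.Nonempty ∧ A ⊆ B ∧ c B ∈ A ∧ c A ≠ c B

/-- Revealed salience: `x ⊨_c y`. -/
def RevSal (c : Finset X → X) (x y : X) : Prop :=
  ∃ A : Finset X, x ∈ A ∧ y ∈ A ∧ x ≠ c A ∧ c (A.erase x) ≠ c A

/-- Axiom of Revealed Temptation. -/
def ART (c : Finset X → X) : Prop :=
  ∀ B : Finset X, B.Nonempty → ∃ x ∈ B,
    ∀ B' B'' : Finset X, x ∈ B' → B' ⊂ B'' → B'' ⊆ B → ¬ Switch c B' B''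

/-- The revealed relation `R^c`. -/
def Rrel (c : Finset X → X) (x y : X) : Prop :=
  (∃ A : Finset X, A.Nonempty ∧ x = c (insert y A) ∧ x ≠ c A) ∨
  (∃ A : Finset X, A.Nonempty ∧ y = c (insert x A) ∧ x = c {x, y}) ∨
  (∃ A : Finset X, A.Nonempty ∧ y ≠ c (insert x A) ∧ y = c {x, y} ∧ y = c A)

/-- The revealed-to-follow relation `F_c`. -/
def Frel (c : Finset X → X) (x y : X) : Prop :=
  (∃ A : Finset X, A.Nonempty ∧ x = c (insert y A) ∧ y = c {x, y}) ∨
  (∃ A : Finset X, A.Nonempty ∧ x = c (insert y A) ∧ x ≠ c A) ∨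
  (∃ A : Finset X, A.Nonempty ∧ x ≠ c (insert y A) ∧ x = c {x, y} ∧ x = c A)

/-- A nonempty finite set has a greatest element for a strict linear order. -/
lemma exists_isRMax {r : X → X → Prop} (hr : StrictLinear r) (A : Finset X) (hA : A.Nonempty) :
    ∃ l, IsRMax r (· ∈ A) l := by
  obtain ⟨⟨-, htr⟩, htot⟩ := hr
  induction hA using Finset.Nonempty.cons_induction with
  | singleton a => exact ⟨a, by simp [IsRMax]⟩
  | cons a s ha hs ih =>
    obtain ⟨l, hl, hmax⟩ := ih
    have hal : a ≠ l := fun h => ha (h ▸ hl)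
    rcases htot a l hal with h | h
    · refine ⟨a, by simp, fun z hz hza => ?_⟩
      rcases Finset.mem_cons.1 hz with rfl | hz
      · exact absurd rfl hza
      · by_cases hzl : z = l
        · exact hzl ▸ h
        · exact htr _ _ _ h (hmax z hz hzl)
    · refine ⟨l, by simp [hl], fun z hz hzl => ?_⟩
      rcases Finset.mem_cons.1 hz with rfl | hz
      · exact h
      · exact hmax z hz hzl

/-- If a list-rationalized choice is not the last element of the menu, deleting the last element
does not change the choice. -/
lemma choice_erase_last {f : X → X → Prop} {c : Finset X → X} (hc : ChoiceFun c)
    (hf : ListRationalizes f c) {A : Finset X} {l : X} (hl : IsRMax f (· ∈ A) l)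
    (hcard : 1 < A.card) (hne : c A ≠ l) : c (A.erase l) = c A := by
  have h := hf.2 A hcard l hl
  have hmem := hc {c (A.erase l), l} ⟨l, by simp⟩
  rw [← h] at hmem
  simp only [Finset.mem_insert, Finset.mem_singleton, hne, or_false] at hmem
  exact hmem.symm

/-- Both revealing patterns are covered at once: `c A ∈ {x, y}` differs from `c {x, y}`. -/
lemma list_follows {f : X → X → Prop} {c : Finset X → X} (hc : ChoiceFun c)
    (hf : ListRationalizes f c) {x y : X} (hxy : x ≠ y) (A : Finset X) (hx : x ∈ A) (hy : y ∈ A)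
    (hey : c (A.erase y) = x) (hcA : c A = x ∨ c A = y) (hne : c A ≠ c {x, y}) : f x y := by
  induction A using Finset.strongInduction with
  | H A ih =>
    by_contra hnf
    have hyx : f y x := (hf.1.2 x y hxy).resolve_left hnf
    obtain ⟨l, hl⟩ := exists_isRMax hf.1 A ⟨x, hx⟩
    have hcard : 1 < A.card := Finset.one_lt_card.2 ⟨x, hx, y, hy, hxy⟩
    have hly : l ≠ y := by
      rintro rfl
      exact hne (by rw [hf.2 A hcard l hl, hey])
    have hlx : l ≠ x := by
      rintro rfl
      exact hnf (hl.2 y hy hxy.symm)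
    have hcl : c A ≠ l := by
      rcases hcA with h | h <;> rw [h]
      exacts [hlx.symm, hly.symm]
    have h1 : c (A.erase l) = c A := choice_erase_last hc hf hl hcard hcl
    have hl' : IsRMax f (· ∈ A.erase y) l :=
      ⟨Finset.mem_erase.2 ⟨hly, hl.1⟩, fun z hz hzl => hl.2 z (Finset.mem_of_mem_erase hz) hzl⟩
    have hcard' : 1 < (A.erase y).card :=
      Finset.one_lt_card.2 ⟨x, Finset.mem_erase.2 ⟨hxy, hx⟩, l, hl'.1, hlx.symm⟩
    have h2 : c ((A.erase y).erase l) = x := by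
      rw [choice_erase_last hc hf hl' hcard' (by rw [hey]; exact hlx.symm), hey]
    exact hnf (ih (A.erase l) (Finset.erase_ssubset hl.1) (Finset.mem_erase.2 ⟨hlx.symm, hx⟩)
      (Finset.mem_erase.2 ⟨hly.symm, hy⟩) (by rw [Finset.erase_right_comm, h2])
      (by rwa [h1]) (by rwa [h1]))

theorem stmt_13 [Fintype X] [Nonempty X] (c : Finset X → X) (hc : ChoiceFun c)
    (hCCLA : CCLA c) (A : Finset X) (hA : A.Nonempty) (x y : X)
    (hx : x ∈ A) (hy : y ∈ A)
    (hcase : (c {x, y} = x ∧ c (A.erase y) = x ∧ c A = y ∧ x ≠ y) ∨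
             (c {x, y} = y ∧ c (A.erase y) = x ∧ c A = x ∧ y ≠ x)) :
    (∀ f : X → X → Prop, ListRationalizes f c → f x y) ∧
    (∀ (Γ : Finset X → Finset X) (rhd : X → X → Prop), ExplByCCLA Γ rhd c →
      ∃ z ∈ A.erase y, rhd z y) := by
  refine ⟨fun f hf => ?_, fun Γ rhd hE => ?_⟩
  · rcases hcase with ⟨h1, h2, h3, h4⟩ | ⟨h1, h2, h3, h4⟩
    · exact list_follows hc hf h4 A hx hy h2 (Or.inr h3) (by rw [h1, h3]; exact h4.symm)
    · exact list_follows hc hf h4.symm A hx hy h2 (Or.inl h3) (by rw [h1, h3]; exact h4.symm)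
  · obtain ⟨⟨⟨hasym, -⟩, htot⟩, ⟨-, -, hcomp⟩, hmax⟩ := hE
    by_contra! hno
    have hxy : x ≠ y := by
      rcases hcase with h | h
      exacts [h.2.2.2, h.2.2.2.symm]
    have hxe : x ∈ A.erase y := Finset.mem_erase.2 ⟨hxy, hx⟩
    have hyx : rhd y x := (htot y x hxy.symm).resolve_right (hno x hxe)
    have hymax : IsRMax rhd (· ∈ A) y := ⟨hy, fun z hz hzy =>
      (htot z y hzy).resolve_left (hno z (Finset.mem_erase.2 ⟨hzy, hz⟩))⟩
    have hex : c (A.erase y) = x := by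
      rcases hcase with h | h
      exacts [h.2.1, h.2.1]
    have hxmax := hmax (A.erase y) ⟨x, hxe⟩
    rw [hex] at hxmax
    have hiff := hcomp A (Finset.one_lt_card.2 ⟨x, hx, y, hy, hxy⟩) x y hymax hxmax
    have hpair := hmax {x, y} ⟨x, by simp⟩
    have hA' := hmax A hA
    rcases hcase with ⟨h1, -, h3, -⟩ | ⟨h1, -, h3, -⟩
    · rw [h1] at hpair
      rw [h3] at hA'
      exact hasym _ _ hyx (hpair.2 y (hiff.2 hA'.1) hxy.symm)
    · rw [h1] at hpair
      rw [h3] at hA'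
      exact hasym _ _ hyx (hA'.2 y (hiff.1 hpair.1) hxy.symm)
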